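/- Let L > 0, L̃ ≥ L, D > 0, n ≥ 1, 1 ≤ b ≤ n, and K ≥ 1 an integer; set λ = b/(2n), α = b·L/(3·L̃·sqrt(n)), M₁ = α/(λ·L), M₂ = 4·M₁·λ²·n/b², and η = 1/sqrt(K). Let (a_k)_{k=0}^K, (v_k)_{k=0}^K, (w_k)_{k=0}^K, (G_k)_{k=0}^{K−1} be nonnegative reals with v₀ = w₀ = 0, satisfying for all 0 ≤ k < K the three inequalities: η·G_k ≤ a_k − a_{k+1} + (α/L)·v_k + (L/α)·D²·η² + (L/2)·D²·η²; v_{k+1} ≤ (1 − λ)·v_k + (2·L̃²·D²/b)·η² + (2·λ²/b)·w_k; and w_{k+1} ≤ (1 − b/(2n))·w_k + (2·n·L̃²·D²/b)·η². Then min_{0 ≤ k < K} G_k ≤ (1/K)·Σ_{k=0}^{K−1} G_k ≤ a₀/sqrt(K) + ( 1/2 + 6·L̃·sqrt(n)/(L·b) )·L·D²/sqrt(K). -/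

import Mathlib

/-!
The potential `Φ_k = a_k + M₁ v_k + M₂ w_k` turns the three coupled recursions into a single
descent inequality `η G_k ≤ Φ_k - Φ_{k+1} + C η²`. The weights are forced by cancellation:
`M₁ λ = α / L` makes the contraction of `v` absorb the term `(α / L) v_k`, and
`M₂ b / (2n) = 2 M₁ λ² / b` makes the contraction of `w` absorb the coupling of `w` into `v`.
Telescoping and dividing by `η K` gives the rate.
-/

open Finset

section Descent

variable {𝕜 : Type*} [Field 𝕜] [LinearOrder 𝕜] [IsStrictOrderedRing 𝕜]

theorem inf'_le_one_div_card_mul_sum {ι : Type*} {s : Finset ι} (hs : s.Nonempty) (f : ι → 𝕜) :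
    s.inf' hs f ≤ 1 / (#s : 𝕜) * ∑ i ∈ s, f i := by
  rw [one_div_mul_eq_div, le_div_iff₀ (by exact_mod_cast hs.card_pos), mul_comm, ← nsmul_eq_mul]
  exact card_nsmul_le_sum s f _ fun _ hi ↦ inf'_le f hi

theorem sum_range_le_sub_add_nsmul {A : Type*} [AddCommGroup A] [PartialOrder A]
    [IsOrderedAddMonoid A] {g Φ : ℕ → A} {c : A} {K : ℕ}
    (h : ∀ k < K, g k ≤ Φ k - Φ (k + 1) + c) :
    ∑ k ∈ range K, g k ≤ Φ 0 - Φ K + K • c :=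
  calc ∑ k ∈ range K, g k
      ≤ ∑ k ∈ range K, (Φ k - Φ (k + 1) + c) := sum_le_sum fun k hk ↦ h k (mem_range.mp hk)
    _ = Φ 0 - Φ K + K • c := by
      rw [sum_add_distrib, sum_range_sub', sum_const, card_range]

theorem average_le_of_descent {η c : 𝕜} {Φ G : ℕ → 𝕜} {K : ℕ} (hη : 0 < η) (hK : 0 < K)
    (h : ∀ k < K, η * G k ≤ Φ k - Φ (k + 1) + c * η ^ 2) :
    1 / (K : 𝕜) * ∑ k ∈ range K, G k ≤ (Φ 0 - Φ K) / (η * K) + c * η := by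
  have : (0 : 𝕜) < K := Nat.cast_pos.mpr hK
  have telescoped : η * ∑ k ∈ range K, G k ≤ Φ 0 - Φ K + K * (c * η ^ 2) := by
    simpa only [mul_sum, nsmul_eq_mul] using sum_range_le_sub_add_nsmul h
  calc 1 / (K : 𝕜) * ∑ k ∈ range K, G k
      = (η * ∑ k ∈ range K, G k) / (η * K) := by field_simp
    _ ≤ (Φ 0 - Φ K + K * (c * η ^ 2)) / (η * K) := by gcongr
    _ = (Φ 0 - Φ K) / (η * K) + c * η := by field_simp

/-- The Lyapunov function of the method: the suboptimality `a` plus weighted mean-square errors of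
the gradient estimator (`v`) and of the table of stored gradients (`w`). -/
def potential (M₁ M₂ : 𝕜) (a v w : ℕ → 𝕜) (k : ℕ) : 𝕜 :=
  a k + M₁ * v k + M₂ * w k

theorem potential_descent {M₁ M₂ g p q r s c₀ c₁ c₂ : 𝕜} {a v w : ℕ → 𝕜} {k : ℕ}
    (hM₁ : 0 ≤ M₁) (hM₂ : 0 ≤ M₂) (hv_balance : M₁ * r = p) (hw_balance : M₂ * s = M₁ * q)
    (ha : g ≤ a k - a (k + 1) + p * v k + c₀)
    (hv : v (k + 1) ≤ (1 - r) * v k + c₁ + q * w k)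
    (hw : w (k + 1) ≤ (1 - s) * w k + c₂) :
    g ≤ potential M₁ M₂ a v w k - potential M₁ M₂ a v w (k + 1) + (c₀ + M₁ * c₁ + M₂ * c₂) := by
  have hv' := mul_le_mul_of_nonneg_left hv hM₁
  have hw' := mul_le_mul_of_nonneg_left hw hM₂
  unfold potential
  linear_combination ha + hv' + hw' - v k * hv_balance - w k * hw_balance

end Descent

section Parameters

variable {L Lt n b lam α M₁ M₂ : ℝ}

theorem estimator_weight_eq (hL : L ≠ 0) (hLt : Lt ≠ 0) (hn : 0 < n) (hb : b ≠ 0)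
    (hlam : lam = b / (2 * n)) (hα : α = b * L / (3 * Lt * √n)) (hM₁ : M₁ = α / (lam * L)) :
    M₁ = 2 * √n / (3 * Lt) := by
  have : 0 < √n := Real.sqrt_pos.mpr hn
  rw [hM₁, hα, hlam]
  field_simp
  rw [Real.sq_sqrt hn.le]

theorem table_weight_eq (hn : n ≠ 0) (hb : b ≠ 0) (hlam : lam = b / (2 * n))
    (hM₂ : M₂ = 4 * M₁ * lam ^ 2 * n / b ^ 2) : M₂ = M₁ / n := by
  rw [hM₂, hlam]
  field_simp
  ring

theorem noise_le (D : ℝ) (hL : L ≠ 0) (hLt : 0 < Lt) (hn : 0 < n) (hb : 0 < b)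
    (hα : α = b * L / (3 * Lt * √n)) (hM₁ : M₁ = 2 * √n / (3 * Lt)) (hM₂ : M₂ = M₁ / n) :
    L / α * D ^ 2 + L / 2 * D ^ 2 + M₁ * (2 * Lt ^ 2 * D ^ 2 / b)
        + M₂ * (2 * n * Lt ^ 2 * D ^ 2 / b)
      ≤ (1 / 2 + 6 * Lt * √n / (L * b)) * L * D ^ 2 := by
  have : 0 < √n := Real.sqrt_pos.mpr hn
  set T := Lt * √n / b * D ^ 2 with hT
  have linearization : L / α * D ^ 2 = 3 * T := by
    rw [hα, hT]; field_simp
  have estimator : M₁ * (2 * Lt ^ 2 * D ^ 2 / b) = 4 / 3 * T := by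
    rw [hM₁, hT]; field_simp; ring
  have table : M₂ * (2 * n * Lt ^ 2 * D ^ 2 / b) = 4 / 3 * T := by
    rw [hM₂, ← estimator]; field_simp
  have bound : (1 / 2 + 6 * Lt * √n / (L * b)) * L * D ^ 2 = L / 2 * D ^ 2 + 6 * T := by
    rw [hT]; field_simp
  have hT_nonneg : 0 ≤ T := by positivity
  linarith

end Parameters

theorem saga_sarah_fw_nonconvex_rate_general (L Lt D n b : ℝ) (K : ℕ)
    (hL : L ≠ 0) (hLt : 0 < Lt) (hn : 0 < n) (hb : 0 < b) (hK : 0 < K)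
    (lam α M₁ M₂ η : ℝ)
    (hlam : lam = b / (2 * n))
    (hα : α = b * L / (3 * Lt * √n))
    (hM₁ : M₁ = α / (lam * L))
    (hM₂ : M₂ = 4 * M₁ * lam ^ 2 * n / b ^ 2)
    (hη : 0 < η)
    (a v w G : ℕ → ℝ)
    (ha : 0 ≤ a K) (hv : 0 ≤ v K) (hw : 0 ≤ w K)
    (hrec1 : ∀ k < K, η * G k ≤ a k - a (k + 1) + (α / L) * v k
      + (L / α) * D ^ 2 * η ^ 2 + (L / 2) * D ^ 2 * η ^ 2)
    (hrec2 : ∀ k < K, v (k + 1) ≤ (1 - lam) * v k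
      + (2 * Lt ^ 2 * D ^ 2 / b) * η ^ 2 + (2 * lam ^ 2 / b) * w k)
    (hrec3 : ∀ k < K, w (k + 1) ≤ (1 - b / (2 * n)) * w k
      + (2 * n * Lt ^ 2 * D ^ 2 / b) * η ^ 2) :
    (1 / (K : ℝ)) * ∑ k ∈ range K, G k
      ≤ (a 0 + M₁ * v 0 + M₂ * w 0) / (η * K)
        + (1 / 2 + 6 * Lt * √n / (L * b)) * L * D ^ 2 * η := by
  have hM₁_eq := estimator_weight_eq hL hLt.ne' hn hb.ne' hlam hα hM₁
  have hM₂_eq := table_weight_eq hn.ne' hb.ne' hlam hM₂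
  have hM₁_nonneg : 0 ≤ M₁ := by rw [hM₁_eq]; positivity
  have hM₂_nonneg : 0 ≤ M₂ := by rw [hM₂_eq]; positivity
  have v_balance : M₁ * lam = α / L := by rw [hM₁, hlam]; field_simp
  have w_balance : M₂ * (b / (2 * n)) = M₁ * (2 * lam ^ 2 / b) := by rw [hM₂]; field_simp; ring
  have noise := noise_le D hL hLt hn hb hα hM₁_eq hM₂_eq
  set C := (1 / 2 + 6 * Lt * √n / (L * b)) * L * D ^ 2
  let Φ := potential M₁ M₂ a v w
  have descent (k : ℕ) (hk : k < K) : η * G k ≤ Φ k - Φ (k + 1) + C * η ^ 2 := by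
    have step := potential_descent hM₁_nonneg hM₂_nonneg v_balance w_balance
      ((hrec1 k hk).trans_eq (add_assoc _ _ _)) (hrec2 k hk) (hrec3 k hk)
    linear_combination step + η ^ 2 * noise
  have hΦ_nonneg : 0 ≤ Φ K := by unfold Φ potential; positivity
  calc (1 / (K : ℝ)) * ∑ k ∈ range K, G k
      ≤ (Φ 0 - Φ K) / (η * K) + C * η := average_le_of_descent hη hK descent
    _ ≤ Φ 0 / (η * K) + C * η := by gcongr; exact sub_le_self _ hΦ_nonneg

/-- Theorem 4 of the paper (Saga Sarah Frank-Wolfe, non-convex case) in its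
deterministic expectation-sequence form, with constant step size `η = 1/√K`. -/
theorem saga_sarah_fw_nonconvex_rate (L Lt D n b : ℝ) (K : ℕ)
    (hL : 0 < L) (hLt : L ≤ Lt) (hD : 0 < D)
    (hn : 1 ≤ n) (hb1 : 1 ≤ b) (hbn : b ≤ n) (hK : 1 ≤ K)
    (lam α M₁ M₂ η : ℝ)
    (hlam : lam = b / (2 * n))
    (hα : α = b * L / (3 * Lt * Real.sqrt n))
    (hM₁ : M₁ = α / (lam * L))
    (hM₂ : M₂ = 4 * M₁ * lam ^ 2 * n / b ^ 2)
    (hη : η = 1 / Real.sqrt K)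
    (a v w G : ℕ → ℝ)
    (ha : ∀ k, 0 ≤ a k) (hv : ∀ k, 0 ≤ v k) (hw : ∀ k, 0 ≤ w k)
    (hG : ∀ k, 0 ≤ G k) (hv0 : v 0 = 0) (hw0 : w 0 = 0)
    (hrec1 : ∀ k < K, η * G k ≤ a k - a (k + 1) + (α / L) * v k
      + (L / α) * D ^ 2 * η ^ 2 + (L / 2) * D ^ 2 * η ^ 2)
    (hrec2 : ∀ k < K, v (k + 1) ≤ (1 - lam) * v k
      + (2 * Lt ^ 2 * D ^ 2 / b) * η ^ 2 + (2 * lam ^ 2 / b) * w k)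
    (hrec3 : ∀ k < K, w (k + 1) ≤ (1 - b / (2 * n)) * w k
      + (2 * n * Lt ^ 2 * D ^ 2 / b) * η ^ 2) :
    Finset.inf' (Finset.range K)
        (Finset.nonempty_range_iff.mpr (Nat.one_le_iff_ne_zero.mp hK)) G
      ≤ (1 / (K : ℝ)) * ∑ k ∈ Finset.range K, G k ∧
    (1 / (K : ℝ)) * ∑ k ∈ Finset.range K, G k
      ≤ a 0 / Real.sqrt K
        + (1 / 2 + 6 * Lt * Real.sqrt n / (L * b)) * L * D ^ 2 / Real.sqrt K := by
  have hK_nonempty := nonempty_range_iff.mpr (Nat.one_le_iff_ne_zero.mp hK)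
  refine ⟨by simpa only [card_range] using inf'_le_one_div_card_mul_sum hK_nonempty G, ?_⟩
  have hη_pos : 0 < η := by rw [hη]; positivity
  simpa only [hv0, hw0, mul_zero, add_zero, hη, one_div_mul_eq_div, Real.div_sqrt, mul_one_div]
    using saga_sarah_fw_nonconvex_rate_general L Lt D n b K hL.ne' (hL.trans_le hLt)
      (one_pos.trans_le hn) (one_pos.trans_le hb1) hK lam α M₁ M₂ η hlam hα hM₁ hM₂ hη_pos
      a v w G (ha K) (hv K) (hw K) hrec1 hrec2 hrec3
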